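/- Fix an integer N ≥ 1 and a real q with 0 < q < 1. For all x ∈ ℤ^N, all y ∈ ℤ^{N+1} with y_0 ≥ 0, and all 1 ≤ i ≤ j ≤ N: (a) H(x⁻_{j,i}, y) − H(x,y) = (q^{−(y_i + y_{i+1} + … + y_j)} − 1) H(x,y); (b) if j ≤ N−1 then q^{x_i−x_j−(j−i)} (1 − q^{x_j−x_{j+1}−1}) H(x,y) = H(x, y^{j,i}) − H(x, y^{j+1,i}), and if j = N then q^{x_i−x_N−(N−i)} H(x,y) = H(x, y^{N,i}) (matching the convention q^{x_N−x_{N+1}−1} := 0). -/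

import Mathlib

/-!
STATEMENT 2: elementary identities for H under a left jump x⁻_{j,i}.
-/

/-- `H(x,y) = 0` if `y₀ > 0`, and `H(x,y) = ∏_{i=1}^N q^{(xᵢ+i) yᵢ}` otherwise. -/
noncomputable def Hfun (q : ℝ) (N : ℕ) (x : ℕ → ℤ) (y : ℕ → ℤ) : ℝ :=
  if 0 < y 0 then 0 else ∏ i ∈ Finset.Icc 1 N, q ^ ((x i + (i : ℤ)) * y i)

/-- `x⁻_{j,i}`: the configuration `x` with `x_i, …, x_j` each decreased by 1. -/
def xminus (x : ℕ → ℤ) (j i : ℕ) : ℕ → ℤ :=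
  fun m => if i ≤ m ∧ m ≤ j then x m - 1 else x m

/-- `y^{j,i}`: `y` with `y_j` decreased by 1 and `y_i` increased by 1. -/
def ymove (y : ℕ → ℤ) (j i : ℕ) : ℕ → ℤ :=
  fun m => y m + (if m = i then 1 else 0) - (if m = j then 1 else 0)

theorem Hfun_eq_zpow_sum {q : ℝ} (hq : q ≠ 0) (N : ℕ) (x y : ℕ → ℤ) :
    Hfun q N x y =
      if 0 < y 0 then 0 else q ^ (∑ m ∈ Finset.Icc 1 N, (x m + (m : ℤ)) * y m) := by
  have prod_zpow (s : Finset ℕ) (f : ℕ → ℤ) : ∏ m ∈ s, q ^ f m = q ^ ∑ m ∈ s, f m := by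
    induction s using Finset.cons_induction with
    | empty => simp
    | cons a s ha ih => rw [Finset.prod_cons, Finset.sum_cons, ih, zpow_add₀ hq]
  rw [Hfun, prod_zpow]

theorem Hfun_xminus {q : ℝ} (hq : q ≠ 0) {N i j : ℕ} (x y : ℕ → ℤ) (hi : 1 ≤ i) (hj : j ≤ N) :
    Hfun q N (xminus x j i) y = q ^ (-(∑ m ∈ Finset.Icc i j, y m)) * Hfun q N x y := by
  have hsum : ∑ m ∈ Finset.Icc 1 N, (xminus x j i m + (m : ℤ)) * y m
      = -(∑ m ∈ Finset.Icc i j, y m) + ∑ m ∈ Finset.Icc 1 N, (x m + (m : ℤ)) * y m := by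
    have hsub : Finset.Icc i j = (Finset.Icc 1 N).filter (fun m => i ≤ m ∧ m ≤ j) := by
      ext m
      simp only [Finset.mem_Icc, Finset.mem_filter]
      omega
    rw [hsub, Finset.sum_filter, ← Finset.sum_neg_distrib, ← Finset.sum_add_distrib]
    refine Finset.sum_congr rfl fun m _ => ?_
    unfold xminus
    split_ifs <;> ring
  rw [Hfun_eq_zpow_sum hq, Hfun_eq_zpow_sum hq, hsum, zpow_add₀ hq, mul_ite, mul_zero]

theorem Hfun_ymove {q : ℝ} (hq : q ≠ 0) {N i j : ℕ} (x y : ℕ → ℤ)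
    (hi : i ∈ Finset.Icc 1 N) (hj : j ∈ Finset.Icc 1 N) :
    Hfun q N x (ymove y j i) = q ^ (x i - x j - ((j : ℤ) - (i : ℤ))) * Hfun q N x y := by
  have hsum : ∑ m ∈ Finset.Icc 1 N, (x m + (m : ℤ)) * ymove y j i m
      = (x i - x j - ((j : ℤ) - (i : ℤ))) + ∑ m ∈ Finset.Icc 1 N, (x m + (m : ℤ)) * y m := by
    simp only [ymove, mul_sub, mul_add, mul_ite, mul_one, mul_zero, Finset.sum_add_distrib,
      Finset.sum_sub_distrib, Finset.sum_ite_eq', hi, hj, if_true]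
    ring
  have hzero : ymove y j i 0 = y 0 := by
    rw [Finset.mem_Icc] at hi hj
    simp [ymove, show 0 ≠ i by omega, show 0 ≠ j by omega]
  rw [Hfun_eq_zpow_sum hq, Hfun_eq_zpow_sum hq, hsum, hzero, zpow_add₀ hq, mul_ite, mul_zero]

theorem H_left_jump_identities (N : ℕ) (hN : 1 ≤ N) (q : ℝ) (hq0 : 0 < q) (hq1 : q < 1)
    (x : ℕ → ℤ) (y : ℕ → ℤ) (hy0 : 0 ≤ y 0) :
    (∀ i j, 1 ≤ i → i ≤ j → j ≤ N →
      Hfun q N (xminus x j i) y - Hfun q N x y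
        = (q ^ (-(∑ m ∈ Finset.Icc i j, y m)) - 1) * Hfun q N x y)
    ∧ (∀ i j, 1 ≤ i → i ≤ j → j ≤ N - 1 →
        q ^ (x i - x j - ((j : ℤ) - (i : ℤ))) * (1 - q ^ (x j - x (j+1) - 1))
            * Hfun q N x y
          = Hfun q N x (ymove y j i) - Hfun q N x (ymove y (j+1) i))
    ∧ (∀ i, 1 ≤ i → i ≤ N →
        q ^ (x i - x N - ((N : ℤ) - (i : ℤ))) * Hfun q N x y
          = Hfun q N x (ymove y N i)) := by
  have hq : q ≠ 0 := hq0.ne'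
  refine ⟨fun i j hi _ hj => ?_, fun i j hi hij hj => ?_, fun i hi hiN => ?_⟩
  · rw [Hfun_xminus hq x y hi hj]
    ring
  · have hiN : i ∈ Finset.Icc 1 N := Finset.mem_Icc.2 (by omega)
    rw [Hfun_ymove hq x y hiN (Finset.mem_Icc.2 (by omega)),
      Hfun_ymove hq x y hiN (Finset.mem_Icc.2 (by omega)),
      show x i - x (j + 1) - (((j + 1 : ℕ) : ℤ) - (i : ℤ))
        = (x i - x j - ((j : ℤ) - (i : ℤ))) + (x j - x (j + 1) - 1) by push_cast; ring,
      zpow_add₀ hq]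
    ring
  · exact (Hfun_ymove hq x y (Finset.mem_Icc.2 ⟨hi, hiN⟩) (Finset.mem_Icc.2 ⟨hN, le_rfl⟩)).symm
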